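/- The thermodynamic limit of the Curie-Weiss free energy exists and equals both the infimum over N and the variational formula: lim_{N→∞} N^{-1} log Z_N(β,h) = inf_N N^{-1} log Z_N(β,h) = sup_{M∈ℝ} (log 2 + log cosh(β(h+M)) − (β/2) M²). -/

import Mathlib

/-! Completing the square, `m² = (m - M)² + (2mM - M²)`. Replacing `m²` by `2mM - M²` decouples
the spins, so the modified partition function factorizes into `exp (N * F(M))`, where `F(M)` is the
expression under the supremum. This only decreases the Boltzmann weights when `β ≥ 0`, so
`exp (N * F(M)) ≤ Z_N` for every `M`. Conversely the dropped square vanishes at `M = m(σ)`, and `m`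
takes at most `N + 1` values, so `Z_N ≤ (N + 1) * exp (N * sup F)`. -/

open Finset Real

/-- The value `±1` of an Ising spin encoded by a Boolean. -/
def spin (b : Bool) : ℝ := if b then 1 else -1

/-- Magnetization of a configuration of `N` Ising spins. -/
noncomputable def cwMag (N : ℕ) (σ : Fin N → Bool) : ℝ := (∑ i, spin (σ i)) / N

/-- Curie-Weiss partition function `Z_N(β,h) = ∑_σ exp((β/2) N m(σ)² + β h ∑ᵢ σᵢ)`. -/
noncomputable def cwZ (N : ℕ) (β h : ℝ) : ℝ :=
  ∑ σ : Fin N → Bool,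
    Real.exp (β / 2 * N * cwMag N σ ^ 2 + β * h * ∑ i, spin (σ i))

open Filter

lemma ciInf_subtype_eq_of_tendsto {ι α : Type*} [ConditionallyCompleteLinearOrder α]
    [TopologicalSpace α] [OrderTopology α] {l : Filter ι} [l.NeBot] {p : ι → Prop} {u : ι → α}
    {a : α} (hp : ∀ᶠ i in l, p i) (hle : ∀ i, p i → a ≤ u i) (hu : Tendsto u l (nhds a)) :
    ⨅ i : {i // p i}, u i = a := by
  have : Nonempty {i // p i} := hp.exists.elim fun i hi => ⟨⟨i, hi⟩⟩
  refine ciInf_eq_of_forall_ge_of_forall_gt_exists_lt (fun i => hle i i.2) fun b hb => ?_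
  obtain ⟨i, hi, hib⟩ := (hp.and (hu.eventually_lt_const hb)).exists
  exact ⟨⟨i, hi⟩, hib⟩

lemma tendsto_log_add_one_div_atTop :
    Tendsto (fun x : ℝ => log (x + 1) / x) atTop (nhds 0) := by
  have hlog : Tendsto (fun x : ℝ => log x / (x - 1)) atTop (nhds 0) := by
    simpa [sub_eq_add_neg] using tendsto_pow_log_div_mul_add_atTop 1 (-1) 1 one_ne_zero
  simpa [Function.comp_def] using
    hlog.comp (tendsto_atTop_add_const_right atTop (1 : ℝ) tendsto_id)

section Spins

variable {ι : Type*} [Fintype ι]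

lemma sum_exp_mul_sum_spin [DecidableEq ι] (c : ℝ) :
    ∑ σ : ι → Bool, exp (c * ∑ i, spin (σ i)) = (2 * cosh c) ^ Fintype.card ι := by
  have single_site : 2 * cosh c = ∑ b : Bool, exp (c * spin b) := by
    simp [spin, cosh_eq, mul_div_cancel₀]
  simp only [single_site, ← card_univ, ← prod_const, prod_univ_sum, Fintype.piFinset_univ,
    mul_sum, exp_sum]

lemma sum_spin_eq_two_mul_card_sub (σ : ι → Bool) :
    ∑ i, spin (σ i) = 2 * (#{i | σ i = true} : ℝ) - Fintype.card ι := by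
  have spin_eq (b : Bool) : spin b = 2 * (if b = true then 1 else 0) - 1 := by
    cases b <;> norm_num [spin]
  simp only [spin_eq, sum_sub_distrib, ← mul_sum, sum_boole, sum_const, card_univ, nsmul_one]

end Spins

lemma sum_spin_eq_mul_cwMag (N : ℕ) (σ : Fin N → Bool) :
    ∑ i, spin (σ i) = N * cwMag N σ := by
  rcases N.eq_zero_or_pos with rfl | hN
  · simp
  · rw [cwMag, mul_div_cancel₀ _ (by positivity)]

lemma card_image_cwMag_le (N : ℕ) : #(univ.image (cwMag N)) ≤ N + 1 := by
  have image_subset :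
      univ.image (cwMag N) ⊆ (range (N + 1)).image fun k : ℕ => (2 * (k : ℝ) - N) / N := by
    refine image_subset_iff.2 fun σ _ => mem_image.2 ⟨#{i | σ i = true}, ?_, ?_⟩
    · simpa [Nat.lt_succ_iff] using card_le_univ {i | σ i = true}
    · rw [cwMag, sum_spin_eq_two_mul_card_sub, Fintype.card_fin]
  simpa using (card_le_card image_subset).trans card_image_le

lemma cwZ_pos (N : ℕ) (β h : ℝ) : 0 < cwZ N β h :=
  sum_pos (fun _ _ => exp_pos _) univ_nonempty

/-- The mean-field free energy functional of the Curie-Weiss model, as a function of the trial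
magnetization `M`: the free energy per site of independent spins in the field `h + M`, with the
correction `-(β/2) M²`. The sign is that of `log Z`, so it is to be maximized. -/
noncomputable def cwMeanField (β h M : ℝ) : ℝ :=
  log 2 + log (cosh (β * (h + M))) - β / 2 * M ^ 2

lemma exp_mul_cwMeanField (N : ℕ) (β h M : ℝ) :
    exp (N * cwMeanField β h M) = ∑ σ : Fin N → Bool,
      exp (β / 2 * N * cwMag N σ ^ 2 + β * h * ∑ i, spin (σ i)
        - β / 2 * N * (cwMag N σ - M) ^ 2) := by
  have exp_log_cosh : exp (log 2 + log (cosh (β * (h + M)))) = 2 * cosh (β * (h + M)) := by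
    rw [exp_add, exp_log two_pos, exp_log (cosh_pos _)]
  calc exp (N * cwMeanField β h M)
      = (2 * cosh (β * (h + M))) ^ N * exp (-(β / 2 * N * M ^ 2)) := by
        rw [← exp_log_cosh, ← exp_nat_mul, ← exp_add, cwMeanField]
        ring_nf
    _ = ∑ σ : Fin N → Bool,
          exp (β * (h + M) * ∑ i, spin (σ i)) * exp (-(β / 2 * N * M ^ 2)) := by
        rw [← sum_mul, sum_exp_mul_sum_spin, Fintype.card_fin]
    _ = _ := by
        refine sum_congr rfl fun σ _ => ?_
        rw [← exp_add, sum_spin_eq_mul_cwMag]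
        ring_nf

lemma exp_mul_cwMeanField_le_cwZ {β : ℝ} (hβ : 0 ≤ β) (N : ℕ) (h M : ℝ) :
    exp (N * cwMeanField β h M) ≤ cwZ N β h := by
  rw [exp_mul_cwMeanField]
  exact sum_le_sum fun σ _ => exp_le_exp.2 (sub_le_self _ (by positivity))

lemma cwZ_le_sum_exp_mul_cwMeanField (N : ℕ) (β h : ℝ) :
    cwZ N β h ≤ ∑ M ∈ univ.image (cwMag N), exp (N * cwMeanField β h M) := by
  simp_rw [exp_mul_cwMeanField]
  rw [sum_comm]
  refine sum_le_sum fun σ _ => ?_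
  refine le_of_eq_of_le ?_ (single_le_sum (fun _ _ => (exp_pos _).le)
    (mem_image_of_mem (cwMag N) (mem_univ σ)))
  rw [sub_self, zero_pow two_ne_zero, mul_zero, sub_zero]

lemma cwZ_le_mul_exp {β h s : ℝ} (hs : ∀ M, cwMeanField β h M ≤ s) (N : ℕ) :
    cwZ N β h ≤ (N + 1) * exp (N * s) :=
  calc cwZ N β h ≤ ∑ M ∈ univ.image (cwMag N), exp (N * cwMeanField β h M) :=
        cwZ_le_sum_exp_mul_cwMeanField N β h
    _ ≤ ∑ _M ∈ univ.image (cwMag N), exp (N * s) := by gcongr with M; exact hs M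
    _ = #(univ.image (cwMag N)) * exp (N * s) := by rw [sum_const, nsmul_eq_mul]
    _ ≤ (N + 1) * exp (N * s) := by gcongr; exact_mod_cast card_image_cwMag_le N

lemma cwMeanField_le_log_cwZ_div {β : ℝ} (hβ : 0 ≤ β) {N : ℕ} (hN : 0 < N) (h M : ℝ) :
    cwMeanField β h M ≤ log (cwZ N β h) / N := by
  rw [le_div_iff₀' (by positivity), le_log_iff_exp_le (cwZ_pos N β h)]
  exact exp_mul_cwMeanField_le_cwZ hβ N h M

lemma log_cwZ_div_le {β h s : ℝ} (hs : ∀ M, cwMeanField β h M ≤ s) {N : ℕ} (hN : 0 < N) :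
    log (cwZ N β h) / N ≤ log (N + 1) / N + s := by
  rw [div_add' _ _ _ (by positivity)]
  gcongr
  calc log (cwZ N β h) ≤ log ((N + 1) * exp (N * s)) :=
        log_le_log (cwZ_pos N β h) (cwZ_le_mul_exp hs N)
    _ = log (N + 1) + s * N := by
        rw [log_mul (by positivity) (exp_pos _).ne', log_exp, mul_comm s]

lemma bddAbove_range_cwMeanField {β : ℝ} (hβ : 0 ≤ β) (h : ℝ) :
    BddAbove (Set.range (cwMeanField β h)) :=
  ⟨_, Set.forall_mem_range.2 (cwMeanField_le_log_cwZ_div hβ one_pos h)⟩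

lemma iSup_cwMeanField_le_log_cwZ_div {β : ℝ} (hβ : 0 ≤ β) (h : ℝ) {N : ℕ} (hN : 0 < N) :
    ⨆ M, cwMeanField β h M ≤ log (cwZ N β h) / N :=
  ciSup_le (cwMeanField_le_log_cwZ_div hβ hN h)

lemma tendsto_log_cwZ_div {β : ℝ} (hβ : 0 ≤ β) (h : ℝ) :
    Tendsto (fun N : ℕ => log (cwZ N β h) / N) atTop (nhds (⨆ M, cwMeanField β h M)) := by
  have upper_tendsto : Tendsto (fun N : ℕ => log (N + 1) / N + ⨆ M, cwMeanField β h M) atTop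
      (nhds (⨆ M, cwMeanField β h M)) := by
    simpa using (tendsto_log_add_one_div_atTop.comp tendsto_natCast_atTop_atTop).add_const
      (⨆ M, cwMeanField β h M)
  refine tendsto_of_tendsto_of_tendsto_of_le_of_le' tendsto_const_nhds upper_tendsto ?_ ?_
  · filter_upwards [eventually_gt_atTop 0] with N hN
    exact iSup_cwMeanField_le_log_cwZ_div hβ h hN
  · filter_upwards [eventually_gt_atTop 0] with N hN
    exact log_cwZ_div_le (le_ciSup (bddAbove_range_cwMeanField hβ h)) hN

/-- the thermodynamic limit of the Curie-Weiss free energy exists and equals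
both the infimum over `N` and the variational formula
`sup_M (log 2 + log cosh(β(h+M)) − (β/2)M²)`. -/
theorem cw_free_energy_thermodynamic_limit (β h : ℝ) (hβ : 0 ≤ β) :
    Filter.Tendsto (fun N : ℕ => Real.log (cwZ N β h) / N) Filter.atTop
        (nhds (⨆ M : ℝ, (Real.log 2 + Real.log (Real.cosh (β * (h + M))) - β / 2 * M ^ 2)))
      ∧ (⨅ N : {n : ℕ // 1 ≤ n}, Real.log (cwZ N β h) / N)
        = ⨆ M : ℝ, (Real.log 2 + Real.log (Real.cosh (β * (h + M))) - β / 2 * M ^ 2) := by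
  have hlim := tendsto_log_cwZ_div hβ h
  have hinf := ciInf_subtype_eq_of_tendsto (eventually_ge_atTop 1)
    (fun _ hN => iSup_cwMeanField_le_log_cwZ_div hβ h hN) hlim
  exact ⟨hlim, hinf⟩
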